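/- arXiv:2201.03089 — 11 statements merged into one kernel-verified Lean document; each statement's English description precedes it below -/
import Mathlib

section
/- Let M be a finite monoid and let A, B ⊆ M. Then: (i) the operation K is monotone, i.e. A ⊆ B implies K(A) ⊆ K(B); (ii) there exists N ∈ ℕ such that A^m ⊆ K(A) for all m ≥ N (i.e. all sufficiently large powers of A, in particular all powers A^{idem+k} beyond the idempotent power of A, are contained in K(A)); (iii) K(A·B) = A·K(B·A)·B; (iv) K(A)·K(A) = K(A); (v) K(K(A)) = K(A). -/
open Pointwise

/-- The merge of a subset `A` of a monoid: `K(A) = ⋂_{n≥1} ⋃_{m≥n} A^m`,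
where `A^m` is the `m`-fold pointwise product. -/
def mergeSet {M : Type*} [Monoid M] (A : Set M) : Set M :=
  ⋂ (n : ℕ) (_ : 1 ≤ n), ⋃ (m : ℕ) (_ : n ≤ m), A ^ m

section Merge

variable {M : Type*} [Monoid M]

theorem mem_mergeSet {A : Set M} {x : M} :
    x ∈ mergeSet A ↔ ∀ n : ℕ, ∃ m, n ≤ m ∧ x ∈ A ^ m := by
  simp only [mergeSet, Set.mem_iInter, Set.mem_iUnion, exists_prop]
  refine ⟨fun h n => ?_, fun h n _ => h n⟩
  obtain ⟨m, hm, hx⟩ := h (n + 1) (Nat.le_add_left 1 n)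
  exact ⟨m, (Nat.le_succ n).trans hm, hx⟩

theorem mergeSet_mono {A B : Set M} (h : A ⊆ B) : mergeSet A ⊆ mergeSet B := by
  intro x hx
  rw [mem_mergeSet] at hx ⊢
  intro n
  obtain ⟨m, hm, hxm⟩ := hx n
  exact ⟨m, hm, Set.pow_subset_pow_left h hxm⟩

theorem exists_pow_subset_mergeSet [Finite M] (A : Set M) :
    ∃ N : ℕ, ∀ m : ℕ, N ≤ m → A ^ m ⊆ mergeSet A := by
  obtain ⟨i, j, hij, h⟩ : ∃ i j : ℕ, i < j ∧ A ^ i = A ^ j := by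
    obtain ⟨i, j, hne, h⟩ := Finite.exists_ne_map_eq_of_infinite fun n : ℕ => A ^ n
    rcases lt_or_gt_of_ne hne with hlt | hlt
    · exact ⟨i, j, hlt, h⟩
    · exact ⟨j, i, hlt, h.symm⟩
  have shift (m : ℕ) (hm : i ≤ m) : A ^ (m + (j - i)) = A ^ m := by
    calc A ^ (m + (j - i)) = A ^ (j + (m - i)) := by congr 1; omega
      _ = A ^ (i + (m - i)) := by rw [pow_add, pow_add, h]
      _ = A ^ m := by congr 1; omega
  have periodic (m : ℕ) (hm : i ≤ m) (k : ℕ) : A ^ (m + k * (j - i)) = A ^ m := by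
    induction k with
    | zero => simp
    | succ k ih => rw [Nat.succ_mul, ← add_assoc, shift _ (hm.trans (Nat.le_add_right _ _)), ih]
  refine ⟨i, fun m hm x hx => mem_mergeSet.2 fun n => ⟨m + n * (j - i), ?_, ?_⟩⟩
  · exact (Nat.le_mul_of_pos_right n (Nat.sub_pos_of_lt hij)).trans (Nat.le_add_left _ _)
  · rwa [periodic m hm n]

theorem mul_pow_succ_eq (a b : M) (n : ℕ) :
    (a * b) ^ (n + 1) = a * (b * a) ^ n * b := by
  induction n with
  | zero => simp
  | succ n ih => rw [pow_succ, ih, pow_succ (b * a)]; simp only [mul_assoc]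

theorem mergeSet_mul_comm [Finite M] (A B : Set M) :
    mergeSet (A * B) = A * mergeSet (B * A) * B := by
  apply Set.Subset.antisymm
  · intro x hx
    obtain ⟨N, hN⟩ := exists_pow_subset_mergeSet (B * A)
    obtain ⟨m, hm, hxm⟩ := mem_mergeSet.1 hx (N + 1)
    obtain ⟨k, rfl⟩ := Nat.exists_eq_add_of_le' (Nat.le_of_add_left_le hm)
    rw [mul_pow_succ_eq] at hxm
    exact Set.mul_subset_mul_right (Set.mul_subset_mul_left (hN k (by omega))) hxm
  · rintro _ ⟨_, ⟨a, ha, c, hc, rfl⟩, b, hb, rfl⟩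
    rw [mem_mergeSet] at hc ⊢
    intro n
    obtain ⟨m, hm, hcm⟩ := hc n
    refine ⟨m + 1, hm.trans (Nat.le_succ m), ?_⟩
    rw [mul_pow_succ_eq]
    exact Set.mul_mem_mul (Set.mul_mem_mul ha hcm) hb

theorem mergeSet_mul_self [Finite M] (A : Set M) :
    mergeSet A * mergeSet A = mergeSet A := by
  apply Set.Subset.antisymm
  · rintro _ ⟨x, hx, y, hy, rfl⟩
    rw [mem_mergeSet] at hx hy ⊢
    intro n
    obtain ⟨k, hk, hxk⟩ := hx n
    obtain ⟨l, -, hyl⟩ := hy 0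
    refine ⟨k + l, hk.trans (Nat.le_add_right k l), ?_⟩
    rw [pow_add]
    exact Set.mul_mem_mul hxk hyl
  · intro x hx
    obtain ⟨N, hN⟩ := exists_pow_subset_mergeSet A
    obtain ⟨m, hm, hxm⟩ := mem_mergeSet.1 hx (N + N)
    obtain ⟨k, rfl⟩ := Nat.exists_eq_add_of_le hm
    rw [add_assoc, pow_add] at hxm
    exact Set.mul_subset_mul (hN N le_rfl) (hN (N + k) (Nat.le_add_right N k)) hxm

theorem mergeSet_mergeSet [Finite M] (A : Set M) :
    mergeSet (mergeSet A) = mergeSet A := by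
  have hpow (n : ℕ) : mergeSet A ^ (n + 1) = mergeSet A :=
    IsIdempotentElem.pow_succ_eq n (mergeSet_mul_self A)
  ext x
  rw [mem_mergeSet]
  constructor
  · intro h
    obtain ⟨m, hm, hx⟩ := h 1
    obtain ⟨k, rfl⟩ := Nat.exists_eq_add_of_le' hm
    rwa [hpow] at hx
  · exact fun hx n => ⟨n + 1, Nat.le_succ n, by rwa [hpow]⟩

end Merge

theorem stmt0 {M : Type*} [Monoid M] [Fintype M] (A B : Set M) :
    (A ⊆ B → mergeSet A ⊆ mergeSet B) ∧
    (∃ N : ℕ, ∀ m : ℕ, N ≤ m → A ^ m ⊆ mergeSet A) ∧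
    mergeSet (A * B) = A * mergeSet (B * A) * B ∧
    mergeSet A * mergeSet A = mergeSet A ∧
    mergeSet (mergeSet A) = mergeSet A :=
  ⟨mergeSet_mono, exists_pow_subset_mergeSet A, mergeSet_mul_comm A B, mergeSet_mul_self A,
    mergeSet_mergeSet A⟩
end

section
/- Let M be a finite ordered monoid with merge and let A ⊆ M be a nonempty subset. Then at least one of the following holds: (i) there exists a ∈ A with a·Closgp(A) ⊊ Closgp(A) (where a·S denotes {a·s : s ∈ S}); (ii) there exists a ∈ A with Closgp(A)·a ⊊ Closgp(A); (iii) Closgp(A) has a maximum, i.e. there exists m ∈ Closgp(A) such that x ≤ m for all x ∈ Closgp(A). -/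
open Pointwise

/-- `closgp mrg A`: the least subset of the monoid containing `A` and closed
under multiplication and the merge operation `mrg`. -/
def closgp {M : Type*} [Monoid M] (mrg : M → M) (A : Set M) : Set M :=
  ⋂₀ {S : Set M | A ⊆ S ∧ (∀ x ∈ S, ∀ y ∈ S, x * y ∈ S) ∧ ∀ x ∈ S, mrg x ∈ S}

section Closgp

variable {M : Type*} [Monoid M] {mrg : M → M} {A : Set M}

theorem subset_closgp : A ⊆ closgp mrg A :=
  Set.subset_sInter fun _ hS => hS.1

theorem closgp_subset {S : Set M} (hA : A ⊆ S) (hmul : ∀ x ∈ S, ∀ y ∈ S, x * y ∈ S)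
    (hmrg : ∀ x ∈ S, mrg x ∈ S) : closgp mrg A ⊆ S :=
  Set.sInter_subset_of_mem ⟨hA, hmul, hmrg⟩

theorem mul_mem_closgp {x y : M} (hx : x ∈ closgp mrg A) (hy : y ∈ closgp mrg A) :
    x * y ∈ closgp mrg A :=
  Set.mem_sInter.2 fun S hS =>
    hS.2.1 x (Set.mem_sInter.1 hx S hS) y (Set.mem_sInter.1 hy S hS)

theorem mrg_mem_closgp {x : M} (hx : x ∈ closgp mrg A) : mrg x ∈ closgp mrg A :=
  Set.mem_sInter.2 fun S hS => hS.2.2 x (Set.mem_sInter.1 hx S hS)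

theorem pow_mem_closgp {x : M} (hx : x ∈ closgp mrg A) {n : ℕ} (hn : 0 < n) :
    x ^ n ∈ closgp mrg A := by
  induction n, hn using Nat.le_induction with
  | base => simpa using hx
  | succ n _ ih => exact pow_succ x n ▸ mul_mem_closgp ih hx

end Closgp

/-- If every element of `S` is divisible by `a` in `S` on both sides, some positive power of `a`
acts as a two-sided identity on `S`. -/
theorem exists_pow_acts_as_one {M : Type*} [Monoid M] [Finite M] {S : Set M} {a : M}
    (hl : ∀ t ∈ S, ∃ s ∈ S, a * s = t) (hr : ∀ t ∈ S, ∃ s ∈ S, s * a = t) :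
    ∃ k, 0 < k ∧ ∀ t ∈ S, a ^ k * t = t ∧ t * a ^ k = t := by
  have hl' (n : ℕ) : ∀ t ∈ S, ∃ s ∈ S, a ^ n * s = t := by
    induction n with
    | zero => exact fun t ht => ⟨t, ht, by simp⟩
    | succ n ih =>
      intro t ht
      obtain ⟨s, hs, rfl⟩ := ih t ht
      obtain ⟨u, hu, rfl⟩ := hl s hs
      exact ⟨u, hu, by rw [pow_succ, mul_assoc]⟩
  have hr' (n : ℕ) : ∀ t ∈ S, ∃ s ∈ S, s * a ^ n = t := by
    induction n with
    | zero => exact fun t ht => ⟨t, ht, by simp⟩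
    | succ n ih =>
      intro t ht
      obtain ⟨s, hs, rfl⟩ := ih t ht
      obtain ⟨u, hu, rfl⟩ := hr s hs
      exact ⟨u, hu, by rw [pow_succ', mul_assoc]⟩
  obtain ⟨i, j, hij, h⟩ : ∃ i j : ℕ, i < j ∧ a ^ i = a ^ j := by
    obtain ⟨i, j, hne, h⟩ := Finite.exists_ne_map_eq_of_infinite (fun n : ℕ => a ^ n)
    rcases lt_or_gt_of_ne hne with hlt | hlt
    · exact ⟨i, j, hlt, h⟩
    · exact ⟨j, i, hlt, h.symm⟩
  refine ⟨j - i, Nat.sub_pos_of_lt hij, fun t ht => ⟨?_, ?_⟩⟩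
  · obtain ⟨s, -, rfl⟩ := hl' i t ht
    rw [← mul_assoc, ← pow_add, Nat.sub_add_cancel hij.le, h]
  · obtain ⟨s, -, rfl⟩ := hr' i t ht
    rw [mul_assoc, ← pow_add, Nat.add_sub_cancel' hij.le, h]

theorem stmt1 {M : Type*} [Monoid M] [Fintype M] [PartialOrder M]
    (hmulmono : ∀ a b c d : M, a ≤ b → c ≤ d → a * c ≤ b * d)
    (mrg : M → M)
    (hmrgmono : ∀ a b : M, a ≤ b → mrg a ≤ mrg b)
    (hmrgidem : ∀ e : M, e * e = e → mrg e = e)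
    (hmrgmul : ∀ a : M, mrg a * mrg a = mrg a)
    (hmrgmrg : ∀ a : M, mrg (mrg a) = mrg a)
    (hmrgconj : ∀ a b : M, mrg (a * b) = a * mrg (b * a) * b)
    (hmrgpow : ∀ a : M, ∃ N : ℕ, ∀ m : ℕ, N ≤ m → a ^ m ≤ mrg a)
    (A : Set M) (hA : A.Nonempty) :
    (∃ a ∈ A, (fun s => a * s) '' closgp mrg A ⊂ closgp mrg A) ∨
    (∃ a ∈ A, (fun s => s * a) '' closgp mrg A ⊂ closgp mrg A) ∨
    (∃ m ∈ closgp mrg A, ∀ x ∈ closgp mrg A, x ≤ m) := by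
  by_contra! hcon
  obtain ⟨hleft, hright, hmax⟩ := hcon
  set S := closgp mrg A
  have hone : ∀ a ∈ A, ∃ k, 0 < k ∧ ∀ t ∈ S, a ^ k * t = t ∧ t * a ^ k = t := by
    intro a ha
    have haS : a ∈ S := subset_closgp ha
    have hl : (fun s => a * s) '' S = S := eq_of_le_of_not_lt
      (Set.image_subset_iff.2 fun s hs => mul_mem_closgp haS hs) (hleft a ha)
    have hr : (fun s => s * a) '' S = S := eq_of_le_of_not_lt
      (Set.image_subset_iff.2 fun s hs => mul_mem_closgp hs haS) (hright a ha)
    exact exists_pow_acts_as_one (fun t ht => hl.ge ht) (fun t ht => hr.ge ht)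
  obtain ⟨e, heS, he⟩ : ∃ e ∈ S, ∀ t ∈ S, e * t = t ∧ t * e = t := by
    obtain ⟨a, ha⟩ := hA
    obtain ⟨k, hk, h⟩ := hone a ha
    exact ⟨a ^ k, pow_mem_closgp (subset_closgp ha) hk, h⟩
  have hle_mrg : ∀ a ∈ A, e ≤ mrg a ∧ a ≤ mrg a := by
    intro a ha
    obtain ⟨k, hk, h⟩ := hone a ha
    have haS : a ∈ S := subset_closgp ha
    have hkS : a ^ k ∈ S := pow_mem_closgp haS hk
    have hek : a ^ k = e := (he _ hkS).1.symm.trans (h e heS).2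
    have hpow (n : ℕ) : ∀ t ∈ S, a ^ (k * n) * t = t := by
      intro t ht
      induction n with
      | zero => simp
      | succ n ih => rw [Nat.mul_succ, pow_add, mul_assoc, (h t ht).1, ih]
    obtain ⟨N, hN⟩ := hmrgpow a
    have hNk : N ≤ k * N := Nat.le_mul_of_pos_left N hk
    constructor
    · have := hN (k * N + k) (by omega)
      rwa [pow_add, hpow N _ hkS, hek] at this
    · have := hN (k * N + 1) (by omega)
      rwa [pow_succ, hpow N a haS] at this
  obtain ⟨p, hpS, hep, hAp⟩ : ∃ p ∈ S, e ≤ p ∧ ∀ a ∈ A, a ≤ p := by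
    refine A.toFinite.induction_on_subset
      (motive := fun B _ => ∃ p ∈ S, e ≤ p ∧ ∀ a ∈ B, a ≤ p) A ?_ ?_
    · exact ⟨e, heS, le_rfl, by simp⟩
    · rintro a B ha - - ⟨p, hpS, hep, hBp⟩
      obtain ⟨hea, haa⟩ := hle_mrg a ha
      have hmS : mrg a ∈ S := mrg_mem_closgp (subset_closgp ha)
      have hp : p ≤ p * mrg a := (he p hpS).2.ge.trans (hmulmono _ _ _ _ le_rfl hea)
      have hm : mrg a ≤ p * mrg a := (he _ hmS).1.ge.trans (hmulmono _ _ _ _ hep le_rfl)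
      refine ⟨p * mrg a, mul_mem_closgp hpS hmS, hep.trans hp, ?_⟩
      rintro b (rfl | hb)
      · exact haa.trans hm
      · exact (hBp b hb).trans hp
  have hp_mrg : p ≤ mrg p := by
    have hpow (n : ℕ) : p ≤ p ^ (n + 1) := by
      induction n with
      | zero => simp
      | succ n ih =>
        rw [pow_succ]
        exact (he p hpS).2.ge.trans (hmulmono _ _ _ _ ih hep)
    obtain ⟨N, hN⟩ := hmrgpow p
    exact (hpow N).trans (hN _ N.le_succ)
  have hbound : S ⊆ Set.Iic (mrg p) := closgp_subset
    (fun a ha => (hAp a ha).trans hp_mrg)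
    (fun x hx y hy => (hmulmono _ _ _ _ hx hy).trans (hmrgmul p).le)
    (fun x hx => (hmrgmono _ _ hx).trans (hmrgmrg p).le)
  obtain ⟨x, hxS, hx⟩ := hmax (mrg p) (mrg_mem_closgp hpS)
  exact hx (hbound hxS)
end

section
/- Let M be a finite ordinal monoid with merge and let A ⊆ M. Define Closgo(A) := {a·ω(b) : a, b ∈ Closgp(A)}. Then at least one of the following holds: (i) there exists a ∈ A with a·Closgordp(A) ⊊ Closgordp(A) (where a·S denotes {a·s : s ∈ S}); (ii) Closgordp(Closgo(A)) ⊊ Closgordp(A); (iii) for all x, y ∈ Closgordp(A), x·y = y and ω(x) = ω(y). -/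
open Pointwise

/-- `closgordp mrg om A`: least subset containing `A`, closed under
multiplication, `mrg` and `om`. -/
def closgordp {M : Type*} [Monoid M] (mrg om : M → M) (A : Set M) : Set M :=
  ⋂₀ {S : Set M | A ⊆ S ∧ (∀ x ∈ S, ∀ y ∈ S, x * y ∈ S) ∧
      (∀ x ∈ S, mrg x ∈ S) ∧ ∀ x ∈ S, om x ∈ S}

/-- `closgo mrg om A = {a · om(b) : a, b ∈ closgp mrg A}`. -/
def closgo {M : Type*} [Monoid M] (mrg om : M → M) (A : Set M) : Set M :=
  {z : M | ∃ a ∈ closgp mrg A, ∃ b ∈ closgp mrg A, z = a * om b}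

section Closures

variable {M : Type*} [Monoid M] {mrg om : M → M} {A : Set M}

theorem subset_closgordp : A ⊆ closgordp mrg om A := fun _ hx _ hS => hS.1 hx

theorem mul_mem_closgordp {x y : M} (hx : x ∈ closgordp mrg om A)
    (hy : y ∈ closgordp mrg om A) : x * y ∈ closgordp mrg om A :=
  fun S hS => hS.2.1 x (hx S hS) y (hy S hS)

theorem mrg_mem_closgordp {x : M} (hx : x ∈ closgordp mrg om A) :
    mrg x ∈ closgordp mrg om A :=
  fun S hS => hS.2.2.1 x (hx S hS)

theorem om_mem_closgordp {x : M} (hx : x ∈ closgordp mrg om A) :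
    om x ∈ closgordp mrg om A :=
  fun S hS => hS.2.2.2 x (hx S hS)

theorem closgordp_subset {S : Set M} (hA : A ⊆ S) (hmul : ∀ x ∈ S, ∀ y ∈ S, x * y ∈ S)
    (hmrg : ∀ x ∈ S, mrg x ∈ S) (hom : ∀ x ∈ S, om x ∈ S) : closgordp mrg om A ⊆ S :=
  fun _ hx => hx S ⟨hA, hmul, hmrg, hom⟩

theorem closgp_subset_closgordp : closgp mrg A ⊆ closgordp mrg om A :=
  fun _ hx => hx _ ⟨subset_closgordp, fun _ hx _ hy => mul_mem_closgordp hx hy,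
    fun _ hx => mrg_mem_closgordp hx⟩

theorem closgo_subset_closgordp : closgo mrg om A ⊆ closgordp mrg om A := by
  rintro _ ⟨a, ha, b, hb, rfl⟩
  exact mul_mem_closgordp (closgp_subset_closgordp ha)
    (om_mem_closgordp (closgp_subset_closgordp hb))

theorem closgordp_closgo_subset :
    closgordp mrg om (closgo mrg om A) ⊆ closgordp mrg om A :=
  closgordp_subset closgo_subset_closgordp (fun _ hx _ hy => mul_mem_closgordp hx hy)
    (fun _ hx => mrg_mem_closgordp hx) (fun _ hx => om_mem_closgordp hx)

end Closures

section LeftTranslation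

variable {M : Type*} [Monoid M] {S : Set M}

/-- `S ⊆ x * S`: left translation by `x` covers `S`. -/
def LeftCovers (S : Set M) (x : M) : Prop := ∀ y ∈ S, ∃ s ∈ S, x * s = y

theorem LeftCovers.mul {x y : M} (hx : LeftCovers S x) (hy : LeftCovers S y) :
    LeftCovers S (x * y) := by
  intro z hz
  obtain ⟨s, hs, rfl⟩ := hx z hz
  obtain ⟨t, ht, rfl⟩ := hy s hs
  exact ⟨t, ht, mul_assoc x y t⟩

theorem LeftCovers.of_mul_left (hS : ∀ x ∈ S, ∀ y ∈ S, x * y ∈ S) {x y : M} (hy : y ∈ S)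
    (h : LeftCovers S (x * y)) : LeftCovers S x := by
  intro z hz
  obtain ⟨s, hs, rfl⟩ := h z hz
  exact ⟨y * s, hS y hy s hs, (mul_assoc x y s).symm⟩

theorem LeftCovers.of_mul_right [Finite M] (hS : ∀ x ∈ S, ∀ y ∈ S, x * y ∈ S) {x y : M}
    (hx : x ∈ S) (hy : y ∈ S) (h : LeftCovers S (x * y)) : LeftCovers S y := by
  have hsurj : Function.Surjective (fun s : S => (⟨x * s, hS x hx s s.2⟩ : S)) := by
    rintro ⟨z, hz⟩
    obtain ⟨s, hs, rfl⟩ := h.of_mul_left hS hy z hz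
    exact ⟨⟨s, hs⟩, rfl⟩
  have hinj := Finite.injective_iff_surjective.mpr hsurj
  intro z hz
  obtain ⟨s, hs, h'⟩ := h (x * z) (hS x hx z hz)
  refine ⟨s, hs, ?_⟩
  have := @hinj ⟨y * s, hS y hy s hs⟩ ⟨z, hz⟩ (Subtype.ext (by simpa [mul_assoc] using h'))
  exact congrArg Subtype.val this

theorem LeftCovers.mul_eq_of_absorb {x u : M} (hu : LeftCovers S u) (h : x * u = u) :
    ∀ y ∈ S, x * y = y := by
  intro y hy
  obtain ⟨s, -, rfl⟩ := hu y hy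
  rw [← mul_assoc, h]

theorem LeftCovers.pow {x : M} (hx : LeftCovers S x) (n : ℕ) : LeftCovers S (x ^ n) := by
  induction n with
  | zero => exact fun y hy => ⟨y, hy, by simp⟩
  | succ n ih => rw [pow_succ]; exact ih.mul hx

theorem LeftCovers.exists_pow_mul_eq [Finite M] {x : M} (hx : LeftCovers S x) :
    ∃ n : ℕ, 1 ≤ n ∧ ∀ y ∈ S, x ^ n * y = y := by
  obtain ⟨i, j, hij, h⟩ : ∃ i j : ℕ, i < j ∧ x ^ i = x ^ j := by
    obtain ⟨i, j, hne, h⟩ := Finite.exists_ne_map_eq_of_infinite (fun n : ℕ => x ^ n)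
    rcases hne.lt_or_gt with hlt | hlt
    · exact ⟨i, j, hlt, h⟩
    · exact ⟨j, i, hlt, h.symm⟩
  refine ⟨j - i, by omega, (hx.pow i).mul_eq_of_absorb ?_⟩
  rw [← pow_add, Nat.sub_add_cancel hij.le, h]

theorem pow_mem_of_mul_mem (hS : ∀ x ∈ S, ∀ y ∈ S, x * y ∈ S) {x : M} (hx : x ∈ S) {n : ℕ}
    (hn : 1 ≤ n) : x ^ n ∈ S := by
  induction n, hn using Nat.le_induction with
  | base => simpa
  | succ n _ ih => rw [pow_succ]; exact hS _ ih x hx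

/-- An element of `S` whose left translation covers `S` has the same `om`-power as any left
identity of `S` lying in `S`. -/
theorem om_eq_of_leftCovers [Finite M] {om : M → M}
    (hompow : ∀ x : M, ∀ n : ℕ, 1 ≤ n → om (x ^ n) = om x)
    (hommul : ∀ x y : M, om (x * y) = x * om (y * x))
    (hS : ∀ x ∈ S, ∀ y ∈ S, x * y ∈ S) {b c : M} (hb : b ∈ S) (hbid : ∀ y ∈ S, b * y = y)
    (hc : c ∈ S) (hcov : LeftCovers S c) : om c = om b := by
  obtain ⟨n, hn, hcid⟩ := hcov.exists_pow_mul_eq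
  have hbb : b * om b = om b := by simpa using (hommul b 1).symm
  rw [← hompow c n hn, ← hbid _ (pow_mem_of_mul_mem hS hc hn), hommul, hcid b hb, hbb]

end LeftTranslation

theorem stmt3 {M : Type*} [Monoid M] [Fintype M] [PartialOrder M]
    (hmulmono : ∀ a b c d : M, a ≤ b → c ≤ d → a * c ≤ b * d)
    (mrg : M → M)
    (hmrgmono : ∀ a b : M, a ≤ b → mrg a ≤ mrg b)
    (hmrgidem : ∀ e : M, e * e = e → mrg e = e)
    (hmrgmul : ∀ a : M, mrg a * mrg a = mrg a)
    (hmrgmrg : ∀ a : M, mrg (mrg a) = mrg a)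
    (hmrgconj : ∀ a b : M, mrg (a * b) = a * mrg (b * a) * b)
    (hmrgpow : ∀ a : M, ∃ N : ℕ, ∀ m : ℕ, N ≤ m → a ^ m ≤ mrg a)
    (om : M → M)
    (homono : ∀ a b : M, a ≤ b → om a ≤ om b)
    (hom1 : om 1 = 1)
    (hompow : ∀ x : M, ∀ n : ℕ, 1 ≤ n → om (x ^ n) = om x)
    (hommul : ∀ x y : M, om (x * y) = x * om (y * x))
    (A : Set M) :
    (∃ a ∈ A, (fun s => a * s) '' closgordp mrg om A ⊂ closgordp mrg om A) ∨
    closgordp mrg om (closgo mrg om A) ⊂ closgordp mrg om A ∨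
    (∀ x ∈ closgordp mrg om A, ∀ y ∈ closgordp mrg om A, x * y = y ∧ om x = om y) := by
  by_contra! hcon
  obtain ⟨hi, hii, hiii⟩ := hcon
  have hSmul : ∀ x ∈ closgordp mrg om A, ∀ y ∈ closgordp mrg om A,
      x * y ∈ closgordp mrg om A := fun _ hx _ hy => mul_mem_closgordp hx hy
  have hself : ∀ x, x * om x = om x := fun x => by simpa using (hommul x 1).symm
  have hmself : ∀ x, x * mrg x = mrg x := fun x => by simpa using (hmrgconj x 1).symm
  have hAcov : ∀ a ∈ A, LeftCovers (closgordp mrg om A) a := by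
    intro a ha y hy
    by_contra hno
    refine hi a ha ⟨?_, fun hsub => hno (hsub hy)⟩
    rintro _ ⟨s, hs, rfl⟩
    exact mul_mem_closgordp (subset_closgordp ha) hs
  have hclos : closgordp mrg om A ⊆ closgordp mrg om (closgo mrg om A) := by
    by_contra hno
    exact hii ⟨closgordp_closgo_subset, hno⟩
  rcases A.eq_empty_or_nonempty with rfl | ⟨a₀, ha₀⟩
  · obtain ⟨x, hx, -⟩ := hiii
    exact closgordp_subset (S := ∅) subset_rfl (by simp) (by simp) (by simp) hx
  -- Every element of the closure is in `closgo` or has a left factor there.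
  have hfac : closgordp mrg om A ⊆ {z | z ∈ closgordp mrg om A ∧
      (LeftCovers (closgordp mrg om A) z →
        ∃ c ∈ closgo mrg om A, LeftCovers (closgordp mrg om A) c)} := by
    refine hclos.trans (closgordp_subset ?_ ?_ ?_ ?_)
    · exact fun c hc => ⟨closgo_subset_closgordp hc, fun h => ⟨c, hc, h⟩⟩
    · exact fun x hx y hy =>
        ⟨hSmul x hx.1 y hy.1, fun h => hx.2 (h.of_mul_left hSmul hy.1)⟩
    · refine fun x hx => ⟨mrg_mem_closgordp hx.1, fun h => hx.2 ?_⟩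
      rw [← hmself x] at h
      exact h.of_mul_left hSmul (mrg_mem_closgordp hx.1)
    · refine fun x hx => ⟨om_mem_closgordp hx.1, fun h => hx.2 ?_⟩
      rw [← hself x] at h
      exact h.of_mul_left hSmul (om_mem_closgordp hx.1)
  obtain ⟨_, ⟨a, ha, b, hb, rfl⟩, hcov⟩ := (hfac (subset_closgordp ha₀)).2 (hAcov a₀ ha₀)
  replace ha : a ∈ closgordp mrg om A := closgp_subset_closgordp ha
  replace hb : b ∈ closgordp mrg om A := closgp_subset_closgordp hb
  have hobcov := hcov.of_mul_right hSmul ha (om_mem_closgordp hb)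
  have hom : ∀ c ∈ closgordp mrg om A, LeftCovers (closgordp mrg om A) c → om c = om b :=
    fun c hc hcc => om_eq_of_leftCovers hompow hommul hSmul hb
      (hobcov.mul_eq_of_absorb (hself b)) hc hcc
  have hid : ∀ c ∈ closgordp mrg om A, LeftCovers (closgordp mrg om A) c →
      ∀ y ∈ closgordp mrg om A, c * y = y := by
    intro c hc hcc
    refine hobcov.mul_eq_of_absorb ?_
    rw [← hom c hc hcc, hself]
  have hall : closgordp mrg om A ⊆
      {z | z ∈ closgordp mrg om A ∧ LeftCovers (closgordp mrg om A) z} := by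
    refine closgordp_subset ?_ ?_ ?_ ?_
    · exact fun x hx => ⟨subset_closgordp hx, hAcov x hx⟩
    · exact fun x hx y hy => ⟨hSmul x hx.1 y hy.1, hx.2.mul hy.2⟩
    · intro x hx
      rwa [hmrgidem x (hid x hx.1 hx.2 x hx.1)]
    · intro x hx
      rw [hom x hx.1 hx.2]
      exact ⟨om_mem_closgordp hb, hobcov⟩
  obtain ⟨x, hx, y, hy, hxy⟩ := hiii
  exact hxy (hid x hx (hall hx).2 y hy)
    ((hom x hx (hall hx).2).trans (hom y hy (hall hy).2).symm)
end

section
/- Let M be a finite monoid equipped with a Wilke ω-power ω. If x ∈ M satisfies x R ω(x) (equivalently, since ω(x) = x·ω(x) always gives ω(x) ≤_R x, if x = ω(x)·a for some a ∈ M), then x is idempotent: x·x = x. -/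
theorem stmt4 {M : Type*} [Monoid M] [Fintype M]
    (om : M → M)
    (hom1 : om 1 = 1)
    (hompow : ∀ x : M, ∀ n : ℕ, 1 ≤ n → om (x ^ n) = om x)
    (hommul : ∀ x y : M, om (x * y) = x * om (y * x))
    (x : M)
    -- `x R ω(x)`: each is a right multiple of the other
    (hR : (∃ a : M, x = om x * a) ∧ (∃ b : M, om x = x * b)) :
    x * x = x := by
  obtain ⟨⟨a, ha⟩, -⟩ := hR
  have hfix : x * om x = om x := by simpa using (hommul x 1).symm
  calc x * x = x * (om x * a) := by rw [← ha]
    _ = om x * a := by rw [← mul_assoc, hfix]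
    _ = x := ha.symm
end

section
/- Let M be a finite monoid equipped with a Wilke ω-power ω, and let x ∈ M satisfy x J ω(x) (i.e. the J-class of x is ω-stable). Then the J-class of x is H-trivial: for all y, z ∈ M, if y J x and y H z, then y = z. -/
/-- Green's preorder `x ≤_L y`: `x = a·y` for some `a`. -/
def leL {M : Type*} [Monoid M] (x y : M) : Prop := ∃ a : M, x = a * y

/-- Green's preorder `x ≤_R y`: `x = y·b` for some `b`. -/
def leR {M : Type*} [Monoid M] (x y : M) : Prop := ∃ b : M, x = y * b

/-- Green's preorder `x ≤_J y`: `x = a·y·b` for some `a, b`. -/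
def leJ {M : Type*} [Monoid M] (x y : M) : Prop := ∃ a b : M, x = a * y * b

/-- Green's equivalence `L`. -/
def eqL {M : Type*} [Monoid M] (x y : M) : Prop := leL x y ∧ leL y x

/-- Green's equivalence `R`. -/
def eqR {M : Type*} [Monoid M] (x y : M) : Prop := leR x y ∧ leR y x

/-- Green's equivalence `J`. -/
def eqJ {M : Type*} [Monoid M] (x y : M) : Prop := leJ x y ∧ leJ y x

/-- Green's equivalence `H`. -/
def eqH {M : Type*} [Monoid M] (x y : M) : Prop := eqL x y ∧ eqR x y

/-- Every element of a finite monoid has an idempotent positive power. -/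
theorem exists_pow_mul_self_eq {M : Type*} [Monoid M] [Finite M] (x : M) :
    ∃ n : ℕ, 1 ≤ n ∧ x ^ n * x ^ n = x ^ n := by
  obtain ⟨i, j, hij, h⟩ := Finite.exists_ne_map_eq_of_infinite (fun n : ℕ => x ^ n)
  wlog hlt : i < j generalizing i j
  · exact this j i hij.symm h.symm (by omega)
  obtain ⟨d, rfl⟩ := Nat.exists_eq_add_of_lt hlt
  have hperiod : ∀ m k : ℕ, i ≤ m → x ^ (m + k * (d + 1)) = x ^ m := by
    intro m k hm
    induction k with
    | zero => simp
    | succ k ih =>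
      obtain ⟨l, rfl⟩ := Nat.exists_eq_add_of_le' hm
      rw [← ih]
      have hexp : l + i + (k + 1) * (d + 1) = l + k * (d + 1) + (i + d + 1) := by ring
      have hexp' : l + i + k * (d + 1) = l + k * (d + 1) + i := by ring
      rw [hexp, hexp', pow_add, pow_add x _ i]
      exact congrArg _ h.symm
  refine ⟨(i + 1) * (d + 1), by nlinarith, ?_⟩
  rw [← pow_add]
  exact hperiod _ _ (by nlinarith)

theorem pow_mul_mul_pow_eq {M : Type*} [Monoid M] {p x q : M} (h : x = p * x * q) (n : ℕ) :
    p ^ n * x * q ^ n = x := by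
  induction n with
  | zero => simp
  | succ n ih =>
    calc p ^ (n + 1) * x * q ^ (n + 1) = p ^ n * (p * x * q) * q ^ n := by
          rw [pow_succ, pow_succ']; simp only [mul_assoc]
      _ = x := by rw [← h, ih]

/-- Stability of finite monoids on the right. -/
theorem leR_mul_of_leJ {M : Type*} [Monoid M] [Finite M] {x b : M} (h : leJ x (x * b)) :
    leR x (x * b) := by
  obtain ⟨p, q, h⟩ := h
  obtain ⟨n, hn, hidem⟩ := exists_pow_mul_self_eq (b * q)
  have hpow := pow_mul_mul_pow_eq (p := p) (x := x) (q := b * q)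
    (by simpa only [mul_assoc] using h) n
  have hfix : x * (b * q) ^ n = x := by
    conv_lhs => rw [← hpow, mul_assoc, hidem, hpow]
  obtain ⟨m, rfl⟩ := Nat.exists_eq_add_of_le' hn
  refine ⟨q * (b * q) ^ m, ?_⟩
  conv_lhs => rw [← hfix, pow_succ']
  simp only [mul_assoc]

/-- Stability of finite monoids on the left. -/
theorem leL_mul_of_leJ {M : Type*} [Monoid M] [Finite M] {x a : M} (h : leJ x (a * x)) :
    leL x (a * x) := by
  obtain ⟨p, q, h⟩ := h
  obtain ⟨n, hn, hidem⟩ := exists_pow_mul_self_eq (p * a)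
  have hpow := pow_mul_mul_pow_eq (p := p * a) (x := x) (q := q)
    (by simpa only [mul_assoc] using h) n
  have hfix : (p * a) ^ n * x = x := by
    conv_lhs => rw [← hpow, mul_assoc, ← mul_assoc, ← mul_assoc, hidem, hpow]
  obtain ⟨m, rfl⟩ := Nat.exists_eq_add_of_le' hn
  refine ⟨(p * a) ^ m * p, ?_⟩
  conv_lhs => rw [← hfix, pow_succ]
  simp only [mul_assoc]

theorem leJ.trans {M : Type*} [Monoid M] {x y z : M} (hxy : leJ x y) (hyz : leJ y z) :
    leJ x z := by
  obtain ⟨a, b, rfl⟩ := hxy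
  obtain ⟨c, d, rfl⟩ := hyz
  exact ⟨a * c, d * b, by simp only [mul_assoc]⟩

/-- In a finite monoid, an element of `eMe` that is `J`-above the idempotent `e` has `e` as
a positive power. -/
theorem exists_pow_eq_of_leJ {M : Type*} [Monoid M] [Finite M] {e g : M}
    (heg : e * g = g) (hge : g * e = g) (h : leJ e g) : ∃ n : ℕ, 1 ≤ n ∧ g ^ n = e := by
  obtain ⟨b, hb⟩ : leR e g := by
    simpa only [heg] using leR_mul_of_leJ (x := e) (b := g) (by rwa [heg])
  obtain ⟨n, hn, hidem⟩ := exists_pow_mul_self_eq g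
  have hpow := pow_mul_mul_pow_eq (p := g) (x := e) (q := b) (by rw [hge, ← hb]) n
  refine ⟨n, hn, ?_⟩
  have hne : g ^ n * e = g ^ n := by
    obtain ⟨m, rfl⟩ := Nat.exists_eq_add_of_le' hn
    rw [pow_succ, mul_assoc, hge]
  rw [← hne]
  conv_lhs => rw [← hpow, ← mul_assoc, ← mul_assoc, hidem, hpow]

/-- In a finite monoid, if `e` is the only element `g` of `eMe` that is `J`-above the
idempotent `e`, then the `J`-class of `e` is `H`-trivial. -/
theorem eq_of_eqH_of_eqJ {M : Type*} [Monoid M] [Finite M] {e y z : M} (he : e * e = e)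
    (htriv : ∀ g : M, e * g = g → g * e = g → leJ e g → g = e)
    (hye : eqJ y e) (hyz : eqH y z) : y = z := by
  obtain ⟨⟨p, q, hy⟩, hey⟩ := hye
  obtain ⟨⟨⟨a', ha'⟩, ⟨a, ha⟩⟩, ⟨-, ⟨c, hc⟩⟩⟩ := hyz
  have hypq : y = p * (e * q) := by rw [hy, mul_assoc]
  obtain ⟨s, hs⟩ : leL (e * q) y := by
    rw [hypq]
    apply leL_mul_of_leJ
    rw [← hypq]
    exact leJ.trans ⟨1, q, by rw [one_mul]⟩ hey
  obtain ⟨t, ht⟩ : leR e (e * q) :=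
    leR_mul_of_leJ (hey.trans ⟨p, 1, by rw [hypq, mul_one]⟩)
  have hgR : s * z * t = e * (q * c * t) := by
    rw [hc, ← mul_assoc s, ← hs]; simp only [mul_assoc]
  have hgL : s * z * t = s * a * p * e := by
    calc s * z * t = s * a * p * (e * q * t) := by rw [ha, hypq]; simp only [mul_assoc]
      _ = s * a * p * e := by rw [← ht]
  have hz : z = p * (s * z * t) * q := by
    calc z = a * p * (e * q) := by rw [ha, hypq, mul_assoc]
      _ = a * p * (e * q * t * q) := by rw [← ht]
      _ = a * y * t * q := by rw [hypq]; simp only [mul_assoc]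
      _ = y * c * t * q := by rw [← ha, hc]
      _ = p * (s * y) * c * t * q := by rw [← hs, ← hypq]
      _ = p * (s * z * t) * q := by rw [hc]; simp only [mul_assoc]
  have hg : s * z * t = e := by
    refine htriv _ ?_ ?_ ?_
    · rw [hgR, ← mul_assoc, he]
    · rw [hgL, mul_assoc, he]
    · exact hey.trans (leJ.trans ⟨a', 1, by rw [← ha', mul_one]⟩ ⟨p, q, hz⟩)
  rw [hz, hg, hy]

theorem stmt5 {M : Type*} [Monoid M] [Fintype M]
    (om : M → M)
    (hom1 : om 1 = 1)
    (hompow : ∀ x : M, ∀ n : ℕ, 1 ≤ n → om (x ^ n) = om x)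
    (hommul : ∀ x y : M, om (x * y) = x * om (y * x))
    (x : M)
    (hJ : eqJ x (om x)) :
    ∀ y z : M, eqJ y x → eqH y z → y = z := by
  intro y z hyx hyz
  have hfix : ∀ u : M, u * om u = om u := fun u => by
    simpa using (hommul u 1).symm
  obtain ⟨n, hn, hidem⟩ := exists_pow_mul_self_eq x
  have hew : x ^ n * om x = om x := by
    simpa only [hompow x n hn] using hfix (x ^ n)
  have hex : leJ (x ^ n) x := by
    obtain ⟨m, rfl⟩ := Nat.exists_eq_add_of_le' hn
    exact ⟨x ^ m, 1, by rw [mul_one, pow_succ]⟩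
  have hxe : leJ x (x ^ n) := hJ.1.trans ⟨1, om x, by rw [one_mul, hew]⟩
  obtain ⟨b, hb⟩ : leR (x ^ n) (om x) := by
    simpa only [hew] using
      leR_mul_of_leJ (x := x ^ n) (b := om x) (by rw [hew]; exact hex.trans hJ.1)
  refine eq_of_eqH_of_eqJ hidem (fun g heg hge hle => ?_)
    ⟨hyx.1.trans hxe, hex.trans hyx.2⟩ hyz
  obtain ⟨k, hk, hgk⟩ := exists_pow_eq_of_leJ heg hge hle
  have hom : om g = om x := by rw [← hompow g k hk, hgk, hompow x n hn]
  calc g = g * (om g * b) := by rw [hom, ← hb, hge]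
    _ = x ^ n := by rw [← mul_assoc, hfix, hom, ← hb]
end

section
/- Let M be a finite monoid equipped with a Wilke ω-power ω, and let x, y ∈ M be such that x, y, ω(x) and ω(y) are all J-equivalent to one another. Then ω(x) L ω(y). -/
/-- Every element of a finite monoid has an idempotent positive power. -/
theorem exists_pow_isIdempotentElem {M : Type*} [Monoid M] [Finite M] (x : M) :
    ∃ n : ℕ, 1 ≤ n ∧ IsIdempotentElem (x ^ n) := by
  obtain ⟨i, j, hij, h⟩ : ∃ i j : ℕ, i < j ∧ x ^ i = x ^ j := by
    obtain ⟨i, j, hne, h⟩ := Finite.exists_ne_map_eq_of_infinite (fun n : ℕ => x ^ n)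
    rcases hne.lt_or_gt with hlt | hlt
    · exact ⟨i, j, hlt, h⟩
    · exact ⟨j, i, hlt, h.symm⟩
  obtain ⟨d, rfl⟩ := Nat.exists_eq_add_of_lt hij
  have hperiod : ∀ k : ℕ, x ^ (i + k * (d + 1)) = x ^ i := by
    intro k
    induction k with
    | zero => simp
    | succ k ih =>
      rw [show i + (k + 1) * (d + 1) = (i + d + 1) + k * (d + 1) by ring, pow_add, ← h,
        ← pow_add, ih]
  refine ⟨(i + 1) * (d + 1), Nat.mul_pos (by omega) (by omega), ?_⟩
  obtain ⟨m, hm⟩ : ∃ m, (i + 1) * (d + 1) = i + m := Nat.exists_eq_add_of_le (by nlinarith)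
  calc x ^ ((i + 1) * (d + 1)) * x ^ ((i + 1) * (d + 1))
      = x ^ (i + (i + 1) * (d + 1)) * x ^ m := by
        rw [← pow_add, ← pow_add]
        congr 1
        omega
    _ = x ^ ((i + 1) * (d + 1)) := by rw [hperiod, ← pow_add, ← hm]

/-- In a finite monoid, an idempotent `g` below an idempotent `f` with `f ≤_J g` equals `f`. -/
theorem eq_of_leJ_of_mul_eq {M : Type*} [Monoid M] [Finite M] {f g : M}
    (hf : f * f = f) (hg : g * g = g) (hfg : f * g = g) (hgf : g * f = g) (h : leJ f g) :
    g = f := by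
  obtain ⟨c, d, hcd⟩ := h
  obtain ⟨u, hu⟩ : ∃ u, u = f * c * g := ⟨_, rfl⟩
  obtain ⟨v, hv⟩ : ∃ v, v = g * d := ⟨_, rfl⟩
  have huv : u * v = f := by
    calc u * v = f * (c * (g * g) * d) := by simp only [hu, hv, mul_assoc]
      _ = f := by rw [hg, ← hcd, hf]
  have hug : u * g = u := by rw [hu, mul_assoc, hg]
  have huf : u * f = u := by rw [hu, mul_assoc, hgf]
  have hpow : ∀ n : ℕ, u ^ (n + 1) * v ^ (n + 1) = f := by
    intro n
    induction n with
    | zero => simpa using huv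
    | succ n ih =>
      calc u ^ (n + 1 + 1) * v ^ (n + 1 + 1)
          = u * (u ^ (n + 1) * v ^ (n + 1)) * v := by
            rw [pow_succ' u, pow_succ v]
            simp only [mul_assoc]
        _ = f := by rw [ih, huf, huv]
  obtain ⟨n, hn, hid⟩ := exists_pow_isIdempotentElem u
  obtain ⟨m, rfl⟩ := Nat.exists_eq_add_of_le' hn
  have hunf : u ^ (m + 1) = f := by
    calc u ^ (m + 1) = u ^ (m + 1) * f := by rw [pow_succ, mul_assoc, huf]
      _ = u ^ (m + 1) * u ^ (m + 1) * v ^ (m + 1) := by rw [mul_assoc, hpow]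
      _ = f := by rw [hid.eq, hpow]
  calc g = u ^ (m + 1) * g := by rw [hunf, hfg]
    _ = f := by rw [pow_succ, mul_assoc, hug, ← pow_succ, hunf]

/-- `J`-equivalent idempotents of a finite monoid are conjugate. -/
theorem exists_mul_eq_of_eqJ {M : Type*} [Monoid M] [Finite M] {e f : M}
    (he : e * e = e) (hf : f * f = f) (h : eqJ e f) : ∃ a b : M, a * b = e ∧ b * a = f := by
  obtain ⟨⟨p, q, hpq⟩, c, d, hcd⟩ := h
  obtain ⟨a, ha⟩ : ∃ a, a = e * p * f := ⟨_, rfl⟩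
  obtain ⟨b, hb⟩ : ∃ b, b = f * q * e := ⟨_, rfl⟩
  have hab : a * b = e := by
    calc a * b = e * (p * (f * f) * q) * e := by simp only [ha, hb, mul_assoc]
      _ = e := by rw [hf, ← hpq, he, he]
  have hbe : b * e = b := by rw [hb, mul_assoc, he]
  have hfb : f * b = b := by rw [hb, ← mul_assoc, ← mul_assoc, hf]
  have haf : a * f = a := by rw [ha, mul_assoc, hf]
  refine ⟨a, b, hab, eq_of_leJ_of_mul_eq hf ?_ ?_ ?_ ⟨c * a, b * d, ?_⟩⟩
  · rw [mul_assoc, ← mul_assoc a, hab, ← mul_assoc, hbe]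
  · rw [← mul_assoc, hfb]
  · rw [mul_assoc, haf]
  · calc f = c * (e * e) * d := by rw [he, ← hcd]
      _ = c * a * (b * a) * (b * d) := by
        rw [← hab]
        simp only [mul_assoc]

/-- If `z ≤_J ω(z)`, then some idempotent `J`-equivalent to `z` has the same ω-power as `z`. -/
theorem exists_idempotent_om_eq_eqJ {M : Type*} [Monoid M] [Finite M] {om : M → M}
    (hompow : ∀ x : M, ∀ n : ℕ, 1 ≤ n → om (x ^ n) = om x)
    (hommul : ∀ x y : M, om (x * y) = x * om (y * x)) {z : M} (hz : leJ z (om z)) :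
    ∃ e : M, e * e = e ∧ om e = om z ∧ eqJ e z := by
  obtain ⟨n, hn, hid⟩ := exists_pow_isIdempotentElem z
  have hom : om (z ^ n) = om z := hompow z n hn
  refine ⟨z ^ n, hid, hom, ?_, hz.trans ⟨1, om z, ?_⟩⟩
  · obtain ⟨m, rfl⟩ := Nat.exists_eq_add_of_le' hn
    exact ⟨1, z ^ m, by rw [one_mul, pow_succ']⟩
  · have habsorb := hommul (z ^ n) 1
    rwa [mul_one, one_mul, hom, ← one_mul (z ^ n)] at habsorb

theorem stmt6 {M : Type*} [Monoid M] [Fintype M]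
    (om : M → M)
    (hom1 : om 1 = 1)
    (hompow : ∀ x : M, ∀ n : ℕ, 1 ≤ n → om (x ^ n) = om x)
    (hommul : ∀ x y : M, om (x * y) = x * om (y * x))
    (x y : M)
    -- `x`, `y`, `ω(x)` and `ω(y)` are all J-equivalent to one another
    (hxy : eqJ x y) (hxox : eqJ x (om x)) (hxoy : eqJ x (om y))
    (hyox : eqJ y (om x)) (hyoy : eqJ y (om y)) (hoxoy : eqJ (om x) (om y)) :
    eqL (om x) (om y) := by
  obtain ⟨e, he, home, hex⟩ := exists_idempotent_om_eq_eqJ hompow hommul hxox.1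
  obtain ⟨f, hf, homf, hfy⟩ := exists_idempotent_om_eq_eqJ hompow hommul hyoy.1
  obtain ⟨a, b, rfl, rfl⟩ := exists_mul_eq_of_eqJ he hf
    ⟨(hex.1.trans hxy.1).trans hfy.2, (hfy.1.trans hxy.2).trans hex.2⟩
  rw [← home, ← homf]
  exact ⟨⟨a, hommul a b⟩, ⟨b, hommul b a⟩⟩
end

section
/- Let M be a finite monoid equipped with a Wilke ω-power ω. Then for every x ∈ M there exists ℓ ∈ ℕ such that ω^[ℓ](x) = ω^[ℓ+1](x), where ω^[ℓ] denotes the ℓ-fold iterate of the map ω. -/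
/-- If `x * f x = f x` for all `x`, every iterate of `f` at `x` is a right multiple of `x`. -/
theorem dvd_iterate_of_mul_apply_eq {M : Type*} [Monoid M] {f : M → M}
    (hf : ∀ x, x * f x = f x) (n : ℕ) (x : M) : x ∣ f^[n] x := by
  induction n generalizing x with
  | zero => exact dvd_rfl
  | succ n ih => exact (Dvd.intro _ (hf x)).trans (ih (f x))

/-- If `x * f x = f x` for all `x` and `f x ∣ x`, then `x` is idempotent. -/
theorem mul_self_eq_of_apply_dvd {M : Type*} [Monoid M] {f : M → M}
    (hf : ∀ x, x * f x = f x) {x : M} (hx : f x ∣ x) : x * x = x := by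
  obtain ⟨u, hu⟩ := hx
  calc x * x = x * (f x * u) := by rw [← hu]
    _ = x := by rw [← mul_assoc, hf, ← hu]

theorem stmt7 {M : Type*} [Monoid M] [Fintype M]
    (om : M → M)
    (hom1 : om 1 = 1)
    (hompow : ∀ x : M, ∀ n : ℕ, 1 ≤ n → om (x ^ n) = om x)
    (hommul : ∀ x y : M, om (x * y) = x * om (y * x)) :
    ∀ x : M, ∃ ℓ : ℕ, om^[ℓ] x = om^[ℓ + 1] x := by
  intro x
  have hmul (a : M) : a * om a = om a := by simpa using (hommul a 1).symm
  obtain ⟨i, j, hij, h⟩ : ∃ i j, i < j ∧ om^[i] x = om^[j] x := by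
    obtain ⟨i, j, hne, h⟩ := Finite.exists_ne_map_eq_of_infinite (fun n => om^[n] x)
    rcases hne.lt_or_gt with hlt | hlt
    · exact ⟨i, j, hlt, h⟩
    · exact ⟨j, i, hlt, h.symm⟩
  obtain ⟨k, rfl⟩ := Nat.exists_eq_add_of_lt hij
  set y := om^[i] x with hy
  have hper : om^[k] (om y) = y := by
    rw [hy, ← Function.iterate_succ_apply, ← Function.iterate_add_apply, ← hy, h,
      show k.succ + i = i + k + 1 by omega]
  have hdvd : om y ∣ y := by
    simpa [hper] using dvd_iterate_of_mul_apply_eq hmul k (om y)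
  have hdvd' : om (om y) ∣ om y := by
    have := dvd_iterate_of_mul_apply_eq hmul k (om (om y))
    rwa [← Function.iterate_succ_apply, Function.iterate_succ_apply', hper] at this
  have hidem : om y * om y = om y := mul_self_eq_of_apply_dvd hmul hdvd'
  have hzy : om y * y = y := by
    obtain ⟨u, hu⟩ := hdvd
    calc om y * y = om y * (om y * u) := by rw [← hu]
      _ = y := by rw [← mul_assoc, hidem, ← hu]
  refine ⟨i + 1, ?_⟩
  rw [Function.iterate_succ_apply', Function.iterate_succ_apply', Function.iterate_succ_apply',
    ← hy]
  have := hommul y (om y)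
  rw [hmul, hzy, hmul] at this
  exact this.symm
end

section
/- Let M be a finite monoid, let A ⊆ M, and let n ≥ 1. Then A^n·K(A) = K(A) and K(A)·A^n = K(A). -/
open Pointwise

theorem mem_mergeSet_iff_frequently {M : Type*} [Monoid M] {A : Set M} {x : M} :
    x ∈ mergeSet A ↔ ∃ᶠ m in Filter.atTop, x ∈ A ^ m := by
  simp only [mergeSet, Set.mem_iInter, Set.mem_iUnion, Filter.frequently_atTop, exists_prop]
  refine ⟨fun h k => ?_, fun h k _ => h k⟩
  obtain ⟨m, hm, hx⟩ := h (k + 1) k.succ_pos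
  exact ⟨m, by omega, hx⟩

theorem exists_frequently_of_frequently_exists {ι α : Type*} [Finite ι] {l : Filter α}
    {p : α → ι → Prop} (h : ∃ᶠ a in l, ∃ i, p a i) : ∃ i, ∃ᶠ a in l, p a i := by
  by_contra! hp
  exact h ((Filter.eventually_all.2 hp).mono fun a ha ⟨i, hi⟩ => ha i hi)

theorem mem_mergeSet_of_frequently_add {M : Type*} [Monoid M] {A : Set M} {x : M} {n : ℕ}
    (h : ∃ᶠ m in Filter.atTop, x ∈ A ^ (m + n)) : x ∈ mergeSet A :=
  mem_mergeSet_iff_frequently.2 ((Filter.tendsto_add_atTop_nat n).frequently h)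

theorem frequently_mem_pow_add {M : Type*} [Monoid M] {A : Set M} {x : M}
    (h : x ∈ mergeSet A) (n : ℕ) : ∃ᶠ m in Filter.atTop, x ∈ A ^ (m + n) := by
  rw [mem_mergeSet_iff_frequently, ← Filter.map_add_atTop_eq_nat n, Filter.frequently_map] at h
  exact h

theorem pow_mul_mergeSet {M : Type*} [Monoid M] [Finite M] (A : Set M) (n : ℕ) :
    A ^ n * mergeSet A = mergeSet A := by
  ext x
  constructor
  · rintro ⟨a, ha, y, hy, rfl⟩
    refine mem_mergeSet_of_frequently_add (n := n)
      ((mem_mergeSet_iff_frequently.1 hy).mono fun m hm => ?_)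
    rw [add_comm, pow_add]
    exact Set.mul_mem_mul ha hm
  · intro hx
    have h : ∃ᶠ m in Filter.atTop,
        ∃ p : M × M, p.1 ∈ A ^ n ∧ p.2 ∈ A ^ m ∧ p.1 * p.2 = x := by
      refine (frequently_mem_pow_add hx n).mono fun m hm => ?_
      rw [add_comm, pow_add] at hm
      obtain ⟨a, ha, y, hy, rfl⟩ := hm
      exact ⟨(a, y), ha, hy, rfl⟩
    obtain ⟨⟨a, y⟩, hp⟩ := exists_frequently_of_frequently_exists h
    obtain ⟨_, ha, _, hxy⟩ := hp.exists
    exact ⟨a, ha, y, mem_mergeSet_iff_frequently.2 (hp.mono fun m hm => hm.2.1), hxy⟩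

theorem mergeSet_mul_pow {M : Type*} [Monoid M] [Finite M] (A : Set M) (n : ℕ) :
    mergeSet A * A ^ n = mergeSet A := by
  ext x
  constructor
  · rintro ⟨y, hy, a, ha, rfl⟩
    refine mem_mergeSet_of_frequently_add (n := n)
      ((mem_mergeSet_iff_frequently.1 hy).mono fun m hm => ?_)
    rw [pow_add]
    exact Set.mul_mem_mul hm ha
  · intro hx
    have h : ∃ᶠ m in Filter.atTop,
        ∃ p : M × M, p.1 ∈ A ^ m ∧ p.2 ∈ A ^ n ∧ p.1 * p.2 = x := by
      refine (frequently_mem_pow_add hx n).mono fun m hm => ?_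
      rw [pow_add] at hm
      obtain ⟨y, hy, a, ha, rfl⟩ := hm
      exact ⟨(y, a), hy, ha, rfl⟩
    obtain ⟨⟨y, a⟩, hp⟩ := exists_frequently_of_frequently_exists h
    obtain ⟨_, _, ha, hxy⟩ := hp.exists
    exact ⟨y, mem_mergeSet_iff_frequently.2 (hp.mono fun m hm => hm.1), a, ha, hxy⟩

theorem stmt9 {M : Type*} [Monoid M] [Fintype M] (A : Set M) (n : ℕ) (hn : 1 ≤ n) :
    A ^ n * mergeSet A = mergeSet A ∧ mergeSet A * A ^ n = mergeSet A :=
  ⟨pow_mul_mergeSet A n, mergeSet_mul_pow A n⟩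
end

section
/- Let M be a finite monoid equipped with a Wilke ω-power ω. If x ∈ M satisfies x J ω(x), then x is idempotent: x·x = x. -/
/-- Stability of finite monoids: if `x = a * x * t`, then `x = x * t ^ k` for some `k ≥ 1`. -/
theorem exists_eq_mul_pow_succ_of_eq_mul_mul {M : Type*} [Monoid M] [Finite M] {a x t : M}
    (h : x = a * x * t) : ∃ k : ℕ, x = x * t ^ (k + 1) := by
  have hpow : ∀ n : ℕ, x = a ^ n * x * t ^ n := by
    intro n
    induction n with
    | zero => simp
    | succ n ih =>
      calc x = a ^ n * x * t ^ n := ih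
        _ = a ^ n * (a * x * t) * t ^ n := by rw [← h]
        _ = a ^ (n + 1) * x * t ^ (n + 1) := by
          rw [pow_succ a, pow_succ' t]
          simp only [mul_assoc]
  obtain ⟨m, n, hlt, hmn⟩ := Set.finite_univ.exists_lt_map_eq_of_forall_mem
    (f := fun n : ℕ => a ^ n) (fun _ => Set.mem_univ _)
  obtain ⟨k, rfl⟩ := Nat.exists_eq_add_of_lt hlt
  refine ⟨k, ?_⟩
  calc x = a ^ (m + k + 1) * x * t ^ (m + k + 1) := hpow _
    _ = a ^ m * x * t ^ m * t ^ (k + 1) := by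
      rw [← hmn, add_assoc, pow_add t, ← mul_assoc]
    _ = x * t ^ (k + 1) := by rw [← hpow]

theorem stmt12 {M : Type*} [Monoid M] [Fintype M]
    (om : M → M)
    (hom1 : om 1 = 1)
    (hompow : ∀ x : M, ∀ n : ℕ, 1 ≤ n → om (x ^ n) = om x)
    (hommul : ∀ x y : M, om (x * y) = x * om (y * x))
    (x : M)
    (hJ : eqJ x (om x)) :
    x * x = x := by
  have hx : x * om x = om x := by
    have h := hommul x x
    rwa [← pow_two, hompow x 2 (by norm_num), eq_comm] at h
  obtain ⟨⟨a, b, hab⟩, -⟩ := hJ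
  have hfix : x = a * x * (om x * b) := by
    rw [mul_assoc a, ← mul_assoc x, hx, ← mul_assoc, ← hab]
  obtain ⟨k, hk⟩ := exists_eq_mul_pow_succ_of_eq_mul_mul hfix
  have hR : x = om x * (b * (om x * b) ^ k) := by
    rw [pow_succ', ← mul_assoc, ← mul_assoc x, hx, mul_assoc] at hk
    exact hk
  calc x * x = x * (om x * (b * (om x * b) ^ k)) := by rw [← hR]
    _ = om x * (b * (om x * b) ^ k) := by rw [← mul_assoc, hx]
    _ = x := hR.symm
end

section
/- Let M be a finite monoid and let u : ℕ → M be any sequence. Then there exist an idempotent e ∈ M and a strictly increasing function φ : ℕ → ℕ such that for all i < j, the product u(φ(i))·u(φ(i)+1)⋯u(φ(j)−1) (over the interval of indices [φ(i), φ(j))) equals e. -/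
/-- An ultrafilter concentrates on a single fibre of any map into a finite type. -/
theorem Ultrafilter.exists_eventually_eq_of_finite {α β : Type*} [Finite β]
    (U : Ultrafilter α) (f : α → β) : ∃ b, ∀ᶠ a in (U : Filter α), f a = b := by
  obtain ⟨b, hb⟩ := Ultrafilter.eq_pure_of_finite (U.map f)
  refine ⟨b, ?_⟩
  have h : {b} ∈ U.map f := by
    rw [hb]
    exact Set.mem_singleton b
  exact h

/-- The infinite Ramsey theorem for pairs of natural numbers and finitely many colours. -/
theorem exists_strictMono_forall_lt_eq_of_finite {β : Type*} [Finite β] (c : ℕ → ℕ → β) :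
    ∃ b, ∃ φ : ℕ → ℕ, StrictMono φ ∧ ∀ i j, i < j → c (φ i) (φ j) = b := by
  let U := Filter.hyperfilter ℕ
  choose d hd using fun m => U.exists_eventually_eq_of_finite (c m)
  obtain ⟨b, hb⟩ := U.exists_eventually_eq_of_finite d
  obtain ⟨φ, -, hφ⟩ := exists_seq_of_forall_finset_exists (fun m => d m = b)
    (fun m n => m < n ∧ c m n = b) (by
      intro s hs
      have hlarge : ∀ᶠ n in (U : Filter ℕ), ∀ m ∈ s, m < n ∧ c m n = b := by
        rw [Filter.eventually_all_finset]
        intro m hm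
        have hlt : ∀ᶠ n in (U : Filter ℕ), m < n :=
          Nat.hyperfilter_le_atTop (Filter.eventually_gt_atTop m)
        filter_upwards [hlt, hd m] with n hn hc
        exact ⟨hn, hc.trans (hs m hm)⟩
      exact (hb.and hlarge).exists)
  exact ⟨b, φ, fun i j hij => (hφ i j hij).1, fun i j hij => (hφ i j hij).2⟩

theorem stmt13 {M : Type*} [Monoid M] [Fintype M] (u : ℕ → M) :
    ∃ e : M, e * e = e ∧ ∃ φ : ℕ → ℕ, StrictMono φ ∧
      ∀ i j : ℕ, i < j →
        (((List.range' (φ i) (φ j - φ i)).map u).prod : M) = e := by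
  obtain ⟨e, φ, hφ, he⟩ := exists_strictMono_forall_lt_eq_of_finite
    fun m n => ((List.range' m (n - m)).map u).prod
  refine ⟨e, ?_, φ, hφ, he⟩
  have h01 : φ 0 < φ 1 := hφ zero_lt_one
  have h12 : φ 1 < φ 2 := hφ one_lt_two
  have hsplit : List.range' (φ 0) (φ 2 - φ 0) =
      List.range' (φ 0) (φ 1 - φ 0) ++ List.range' (φ 1) (φ 2 - φ 1) := by
    have h := List.range'_append_1 (s := φ 0) (m := φ 1 - φ 0) (n := φ 2 - φ 1)
    rw [show φ 0 + (φ 1 - φ 0) = φ 1 by omega,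
      show φ 1 - φ 0 + (φ 2 - φ 1) = φ 2 - φ 0 by omega] at h
    exact h.symm
  have h02 := he 0 2 two_pos
  rwa [hsplit, List.map_append, List.prod_append, he 0 1 zero_lt_one, he 1 2 one_lt_two] at h02
end

section
/- Let M be a finite monoid equipped with a Wilke ω-power ω. On subsets of M, consider the pointwise product, the merge operation K, and the operation Ω(X) := {p·ω(q) : p, q ∈ ⟨X⟩}, where ⟨X⟩ denotes the subsemigroup of M generated by X (all products of nonempty finite sequences of elements of X). Then M is aperiodic if and only if the least collection of subsets of M that contains every singleton {x} for x ∈ M and is closed under pointwise product, K, and Ω consists only of singletons. -/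
open Pointwise

/-- The subsemigroup of a monoid generated by a set `X`: all products of
nonempty finite sequences of elements of `X`. -/
def genSubsemigroup {M : Type*} [Monoid M] (X : Set M) : Set M :=
  {x : M | ∃ l : List M, l ≠ [] ∧ (∀ a ∈ l, a ∈ X) ∧ l.prod = x}

/-- `Ω(X) = {p·ω(q) : p, q ∈ ⟨X⟩}`. -/
def bigOmega {M : Type*} [Monoid M] (om : M → M) (X : Set M) : Set M :=
  {z : M | ∃ p ∈ genSubsemigroup X, ∃ q ∈ genSubsemigroup X, z = p * om q}

/-- The least collection of subsets of `M` containing every singleton and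
closed under pointwise product, merge `K` and `Ω`. -/
def satColl {M : Type*} [Monoid M] (om : M → M) : Set (Set M) :=
  ⋂₀ {C : Set (Set M) | (∀ x : M, {x} ∈ C) ∧ (∀ X ∈ C, ∀ Y ∈ C, X * Y ∈ C) ∧
      (∀ X ∈ C, mergeSet X ∈ C) ∧ ∀ X ∈ C, bigOmega om X ∈ C}

lemma mem_mergeSet_singleton {M : Type*} [Monoid M] {x y : M} :
    y ∈ mergeSet {x} ↔ ∀ n, 1 ≤ n → ∃ m, n ≤ m ∧ x ^ m = y := by
  simp [mergeSet, Set.singleton_pow, eq_comm]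

lemma mergeSet_singleton_of_pow_succ_eq {M : Type*} [Monoid M] {x : M} {n : ℕ}
    (hn : 1 ≤ n) (h : x ^ (n + 1) = x ^ n) : mergeSet {x} = {x ^ n} := by
  have stable (m : ℕ) (hm : n ≤ m) : x ^ m = x ^ n := by
    induction m, hm using Nat.le_induction with
    | base => rfl
    | succ m _ ih => rw [pow_succ, ih, ← pow_succ, h]
  ext y
  rw [mem_mergeSet_singleton, Set.mem_singleton_iff]
  constructor
  · intro hy
    obtain ⟨m, hm, rfl⟩ := hy n hn
    exact stable m hm
  · rintro rfl k -
    exact ⟨max n k, le_max_right n k, stable _ (le_max_left n k)⟩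

lemma pow_mem_mergeSet_singleton {M : Type*} [Monoid M] {x : M} {a p m : ℕ}
    (hp : 1 ≤ p) (h : x ^ (a + p) = x ^ a) (hm : a ≤ m) : x ^ m ∈ mergeSet {x} := by
  have hper : x ^ (m + p) = x ^ m := by
    obtain ⟨k, rfl⟩ := Nat.exists_eq_add_of_le hm
    rw [add_right_comm, pow_add, h, ← pow_add]
  rw [mem_mergeSet_singleton]
  intro n _
  refine ⟨m + n * p, by nlinarith, ?_⟩
  clear * - hper
  induction n with
  | zero => simp
  | succ n ih => rw [Nat.succ_mul, add_comm (n * p), ← add_assoc, pow_add, hper, ← pow_add, ih]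

lemma mem_genSubsemigroup_singleton {M : Type*} [Monoid M] {x y : M} :
    y ∈ genSubsemigroup {x} ↔ ∃ n, 1 ≤ n ∧ x ^ n = y := by
  constructor
  · rintro ⟨l, hl, hx, rfl⟩
    exact ⟨l.length, List.length_pos_iff.mpr hl, (List.prod_eq_pow_card l x hx).symm⟩
  · rintro ⟨n, hn, rfl⟩
    exact ⟨List.replicate n x, by simp; omega, fun a ha => List.eq_of_mem_replicate ha,
      List.prod_replicate n x⟩

lemma bigOmega_singleton {M : Type*} [Monoid M] {om : M → M}
    (hompow : ∀ x : M, ∀ n : ℕ, 1 ≤ n → om (x ^ n) = om x)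
    (hommul : ∀ x y : M, om (x * y) = x * om (y * x)) (x : M) :
    bigOmega om {x} = {om x} := by
  have absorb : x * om x = om x := by
    have h := hommul x x
    rwa [← sq, hompow x 2 one_le_two, eq_comm] at h
  have absorb_pow (n : ℕ) : x ^ n * om x = om x := by
    induction n with
    | zero => simp
    | succ n ih => rw [pow_succ, mul_assoc, absorb, ih]
  ext z
  rw [Set.mem_singleton_iff]
  constructor
  · rintro ⟨p, hp, q, hq, rfl⟩
    obtain ⟨m, -, rfl⟩ := mem_genSubsemigroup_singleton.mp hp
    obtain ⟨n, hn, rfl⟩ := mem_genSubsemigroup_singleton.mp hq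
    rw [hompow x n hn, absorb_pow]
  · rintro rfl
    have hx : x ∈ genSubsemigroup {x} :=
      mem_genSubsemigroup_singleton.mpr ⟨1, le_rfl, pow_one x⟩
    exact ⟨x, hx, x, hx, absorb.symm⟩

theorem stmt14 {M : Type*} [Monoid M] [Fintype M]
    (om : M → M)
    (hom1 : om 1 = 1)
    (hompow : ∀ x : M, ∀ n : ℕ, 1 ≤ n → om (x ^ n) = om x)
    (hommul : ∀ x y : M, om (x * y) = x * om (y * x)) :
    (∀ x : M, ∃ n : ℕ, 1 ≤ n ∧ x ^ (n + 1) = x ^ n) ↔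
    (∀ X ∈ satColl om, ∃ x : M, X = {x}) := by
  constructor
  · intro hap X hX
    refine hX {X | ∃ x : M, X = {x}} ⟨fun x => ⟨x, rfl⟩, ?_, ?_, ?_⟩
    · rintro _ ⟨x, rfl⟩ _ ⟨y, rfl⟩
      exact ⟨x * y, Set.singleton_mul_singleton⟩
    · rintro _ ⟨x, rfl⟩
      obtain ⟨n, hn, h⟩ := hap x
      exact ⟨x ^ n, mergeSet_singleton_of_pow_succ_eq hn h⟩
    · rintro _ ⟨x, rfl⟩
      exact ⟨om x, bigOmega_singleton hompow hommul x⟩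
  · intro hsing x
    obtain ⟨y, hy⟩ := hsing (mergeSet {x}) fun C hC => hC.2.2.1 _ (hC.1 x)
    obtain ⟨a, p, hp, h⟩ : ∃ a p, 1 ≤ p ∧ x ^ (a + p) = x ^ a := by
      obtain ⟨a, b, hab, h⟩ := Finite.exists_ne_map_eq_of_infinite fun n : ℕ => x ^ n
      rcases hab.lt_or_gt with hlt | hlt
      · exact ⟨a, b - a, by omega, by rw [Nat.add_sub_cancel' hlt.le]; exact h.symm⟩
      · exact ⟨b, a - b, by omega, by rw [Nat.add_sub_cancel' hlt.le]; exact h⟩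
    have eq_y (m : ℕ) (hm : a ≤ m) : x ^ m = y := by
      have hmem := pow_mem_mergeSet_singleton hp h hm
      rwa [hy] at hmem
    exact ⟨a + 1, by omega, by rw [eq_y _ (by omega), eq_y _ (by omega)]⟩
end
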